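/- The partial order 𝔑 is a well partial order on X*: for every infinite sequence m_1, m_2, m_3, … of words in X*, there exist indices i < j with m_i ≤_𝔑 m_j. -/

import Mathlib

/-- A standard term order on the free monoid `X*` on the countable alphabet
`X = {x₁, x₂, …}`, whose words we represent as lists of positive integers
(the word `x_{i₁} ⋯ x_{i_d}` is the list `[i₁, …, i_d]`).  It is a strict
total order such that the empty word `1` is smallest, which is compatible
with two-sided multiplication (concatenation), and with `x₁ < x₂ < ⋯`. -/
structure StdTermOrder where
  lt : List ℕ+ → List ℕ+ → Prop
  irrefl : ∀ a, ¬ lt a a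
  trans : ∀ a b c, lt a b → lt b c → lt a c
  total : ∀ a b, a ≠ b → lt a b ∨ lt b a
  one_lt : ∀ t, t ≠ [] → lt [] t
  mul_lt : ∀ a b s t, lt s t → lt (a ++ s ++ b) (a ++ t ++ b)
  std : ∀ i j : ℕ+, i < j → lt [i] [j]

/-- The partial order `𝔑`, the intersection of all standard term orders:
`m ≤_𝔑 m'` iff `m ≤ m'` holds for every standard term order on `X*`. -/
def Nle (m m' : List ℕ+) : Prop := ∀ T : StdTermOrder, m = m' ∨ T.lt m m'

/-- The strict version of `𝔑`. -/
def Nlt (m m' : List ℕ+) : Prop := Nle m m' ∧ m ≠ m'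

/-- `m'` covers `m` in the partial order `𝔑`. -/
def NCovers (m m' : List ℕ+) : Prop :=
  Nlt m m' ∧ ∀ k, Nlt m k → ¬ Nlt k m'

/-!
Higman's lemma well-quasi-orders words by embeddings that may enlarge letters. Such an embedding
is assembled from inequalities `1 ≤ w` and `x_i ≤ x_j` (`i ≤ j`) by concatenation alone, and `𝔑`
satisfies these inequalities and is compatible with concatenation because every standard term
order is. Hence `𝔑` contains Higman's order, and a relation containing a well-quasi-order is one.
-/

section Higman

variable {α : Type*} {r : α → α → Prop} {s : List α → List α → Prop}

theorem wellQuasiOrdered_sublistForall₂ [IsPreorder α r] (hr : WellQuasiOrdered r) :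
    WellQuasiOrdered (List.SublistForall₂ r) := by
  have higman := Set.PartiallyWellOrderedOn.partiallyWellOrderedOn_sublistForall₂ r
    (Set.partiallyWellOrderedOn_univ_iff.2 hr)
  exact fun f => higman.exists_lt fun _ _ _ => Set.mem_univ _

theorem rel_of_sublistForall₂ (nil : ∀ l, s [] l) (singleton : ∀ x y, r x y → s [x] [y])
    (append : ∀ a b c d, s a b → s c d → s (a ++ c) (b ++ d)) {l₁ l₂ : List α}
    (h : List.SublistForall₂ r l₁ l₂) : s l₁ l₂ := by
  induction h with
  | nil => exact nil _
  | cons hxy _ ih => exact append _ _ _ _ (singleton _ _ hxy) ih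
  | cons_right _ ih => exact append _ _ _ _ (nil [_]) ih

theorem wellQuasiOrdered_of_append [IsPreorder α r] (hr : WellQuasiOrdered r)
    (nil : ∀ l, s [] l) (singleton : ∀ x y, r x y → s [x] [y])
    (append : ∀ a b c d, s a b → s c d → s (a ++ c) (b ++ d)) : WellQuasiOrdered s := by
  intro f
  obtain ⟨i, j, hij, h⟩ := wellQuasiOrdered_sublistForall₂ hr f
  exact ⟨i, j, hij, rel_of_sublistForall₂ nil singleton append h⟩

end Higman

namespace Nle

theorem nil_left (m : List ℕ+) : Nle [] m := by
  intro T
  by_cases hm : m = []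
  · exact Or.inl hm.symm
  · exact Or.inr (T.one_lt m hm)

theorem singleton {i j : ℕ+} (hij : i ≤ j) : Nle [i] [j] := by
  intro T
  rcases hij.eq_or_lt with rfl | hlt
  · exact Or.inl rfl
  · exact Or.inr (T.std i j hlt)

theorem trans {a b c : List ℕ+} (hab : Nle a b) (hbc : Nle b c) : Nle a c := by
  intro T
  rcases hab T with rfl | hab
  · exact hbc T
  rcases hbc T with rfl | hbc
  · exact Or.inr hab
  · exact Or.inr (T.trans a b c hab hbc)

theorem append_left_right {m m' : List ℕ+} (h : Nle m m') (a b : List ℕ+) :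
    Nle (a ++ m ++ b) (a ++ m' ++ b) := by
  intro T
  rcases h T with rfl | h
  · exact Or.inl rfl
  · exact Or.inr (T.mul_lt a b m m' h)

theorem append {a b c d : List ℕ+} (hab : Nle a b) (hcd : Nle c d) : Nle (a ++ c) (b ++ d) := by
  have hleft : Nle (a ++ c) (b ++ c) := hab.append_left_right [] c
  have hright : Nle (b ++ c) (b ++ d) := by
    simpa only [List.append_nil] using hcd.append_left_right b []
  exact hleft.trans hright

end Nle

/-- `𝔑` is a well partial order on `X*`: every infinite sequence of words
contains an increasing pair. -/
theorem stmt2 (f : ℕ → List ℕ+) : ∃ i j : ℕ, i < j ∧ Nle (f i) (f j) := by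
  exact wellQuasiOrdered_of_append wellQuasiOrdered_le Nle.nil_left
    (fun _ _ => Nle.singleton) (fun _ _ _ _ => Nle.append) f
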